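/- Let n ≥ 2 and let G be a simple graph on Fin n. Suppose at least one of the following holds: (i) every vertex of G has degree at most 3 and G contains no clique on 4 vertices; (ii) the number of vertices of G of degree at least 3 is at most 3; (iii) there exists a vertex u of G such that the induced subgraph of G on the complement of {u} is acyclic (this includes the case where G itself is acyclic). Then there exists a matrix X : Matrix (Fin 2) (Fin n) (ZMod 2) of rank 2 such that every column of X is nonzero and for all j, k with G.Adj j k the j-th and k-th columns of X differ. (Equivalently, a 2^n factorial in blocks of size four exists from which all main effects and all interactions of G are estimable.) -/

import Mathlib

/-!
The nonzero vectors of `GF(2)²` are three colours, so the columns of `X` form a proper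
3-colouring of `G`. Conversely a proper 3-colouring gives such a matrix, of rank 2 as soon as two
colours occur, and since `n ≥ 2` this can be arranged. It remains to 3-colour `G`.

With at most three vertices of degree at least 3, these get distinct colours and the others, of
degree at most 2, are coloured greedily (`colour_of_few_high`). If `G - u` is a forest, it is
2-colourable and `u` gets the third colour (`colour_of_acyclic`).

For maximum degree 3 and no `K₄` this is Brooks' theorem (`brooks_three`), proved by induction on
the vertex set `S`. A vertex with at most two neighbours in `S` may be removed, so the graph on `S`
is cubic. Some `v` has two nonadjacent neighbours `x`, `y`. Take a longest path starting
`x, v, y, …`. If it covers `S`, the vertices are coloured along it, with `x` and `y` alike and `v`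
last (`colour_of_path`). Otherwise the neighbours of its end `h` all lie on the path, and the part
from the farthest of them to `h` closes up to a cycle. The vertices off the cycle are coloured by
induction. If some edge leaves the cycle, there are cyclically consecutive `w`, `u` such that `w`
has a neighbour `x'` off the cycle and `u` has none; `u` gets the colour of `x'`, and going around
the cycle from `u` one ends at `w`, which sees the same colour twice (`colour_of_cycle`).
-/

open Finset

set_option linter.unusedSectionVars false

namespace BlocksOfFour

variable {V : Type*} [Fintype V] [DecidableEq V] {G : SimpleGraph V} [DecidableRel G.Adj]

/-- `f` restricts to a proper 3-colouring of the subgraph induced on `S`; its values outside `S`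
are irrelevant, so that `f` stands for a partial colouring with domain `S`. -/
def ProperOn (G : SimpleGraph V) (f : V → Fin 3) (S : Finset V) : Prop :=
  ∀ u ∈ S, ∀ v ∈ S, G.Adj u v → f u ≠ f v

lemma ProperOn.update {f : V → Fin 3} {S : Finset V} (hf : ProperOn G f S) {v : V} (hv : v ∉ S)
    (c : Fin 3) (hc : ∀ s ∈ S, G.Adj v s → f s ≠ c) :
    ProperOn G (Function.update f v c) (insert v S) := by
  intro a ha b hb hab
  rw [mem_insert] at ha hb
  rcases ha with rfl | ha <;> rcases hb with rfl | hb
  · exact (G.irrefl hab).elim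
  · have : b ≠ a := fun h => hv (h ▸ hb)
    simpa [this] using (hc b hb hab).symm
  · have : a ≠ b := fun h => hv (h ▸ ha)
    simpa [this] using hc a ha hab.symm
  · have h1 : a ≠ v := fun h => hv (h ▸ ha)
    have h2 : b ≠ v := fun h => hv (h ▸ hb)
    simpa [h1, h2] using hf a ha b hb hab

/-- A vertex whose coloured neighbours show at most two colours can be coloured. -/
lemma ProperOn.extend {f : V → Fin 3} {S : Finset V} (hf : ProperOn G f S) {v : V} (hv : v ∉ S)
    (hc : ((G.neighborFinset v ∩ S).image f).card ≤ 2) :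
    ∃ g, ProperOn G g (insert v S) ∧ ∀ u, u ≠ v → g u = f u := by
  obtain ⟨c, hcc⟩ : ∃ c, c ∉ (G.neighborFinset v ∩ S).image f := by
    by_contra! h
    have := card_le_card (fun x _ => h x : (univ : Finset (Fin 3)) ⊆ _)
    simp at this
    omega
  refine ⟨Function.update f v c, hf.update hv c fun s hs hvs he => hcc ?_, fun u hu => by simp [hu]⟩
  exact mem_image.2 ⟨s, by simp [hvs, hs], he⟩

/-- A vertex of degree at most three with a neighbour not yet coloured can be coloured. -/
lemma ProperOn.extend_of_uncolored {f : V → Fin 3} {S : Finset V} (hf : ProperOn G f S) {v w : V}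
    (hd : G.degree v ≤ 3) (hv : v ∉ S) (hvw : G.Adj v w) (hw : w ∉ S) :
    ∃ g, ProperOn G g (insert v S) ∧ ∀ u, u ≠ v → g u = f u := by
  refine hf.extend hv (card_image_le.trans ?_)
  have h1 : G.neighborFinset v ∩ S ⊆ (G.neighborFinset v).erase w := by
    intro x hx
    rw [mem_inter] at hx
    exact mem_erase.2 ⟨fun h => hw (h ▸ hx.2), hx.1⟩
  have h2 := card_le_card h1
  rw [card_erase_of_mem (by simpa using hvw), G.card_neighborFinset_eq_degree] at h2
  omega

/-- A vertex of degree at most three with two neighbours of the same colour can be coloured. -/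
lemma ProperOn.extend_of_eq {f : V → Fin 3} {S : Finset V} (hf : ProperOn G f S) {v a b : V}
    (hd : G.degree v ≤ 3) (hv : v ∉ S) (ha : G.Adj v a) (hb : G.Adj v b) (hab : a ≠ b)
    (he : f a = f b) :
    ∃ g, ProperOn G g (insert v S) ∧ ∀ u, u ≠ v → g u = f u := by
  refine hf.extend hv ?_
  have h1 : (G.neighborFinset v ∩ S).image f ⊆ ((G.neighborFinset v).erase a).image f := by
    intro c hc
    obtain ⟨x, hx, rfl⟩ := mem_image.1 hc
    rw [mem_inter] at hx
    by_cases hxa : x = a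
    · exact mem_image.2 ⟨b, mem_erase.2 ⟨hab.symm, by simpa using hb⟩, by rw [hxa, he]⟩
    · exact mem_image.2 ⟨x, mem_erase.2 ⟨hxa, hx.1⟩, rfl⟩
  have h2 := (card_le_card h1).trans card_image_le
  rw [card_erase_of_mem (by simpa using ha), G.card_neighborFinset_eq_degree] at h2
  omega

/-- Greedy colouring along an uncoloured path `l ++ [w]`: each vertex of `l` is coloured while its
successor is still uncoloured. -/
lemma ProperOn.extend_path (hd : ∀ v, G.degree v ≤ 3) (w : V) (l : List V) :
    ∀ (f : V → Fin 3) (S : Finset V), ProperOn G f S → (l ++ [w]).IsChain G.Adj →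
      (l ++ [w]).Nodup → (∀ x ∈ l ++ [w], x ∉ S) →
      ∃ g, ProperOn G g (S ∪ l.toFinset) ∧ ∀ u, u ∉ l → g u = f u := by
  induction l with
  | nil => intro f S hf _ _ _; exact ⟨f, by simpa using hf, fun _ _ => rfl⟩
  | cons a l ih =>
    intro f S hf hch hnd hS
    obtain ⟨b, hb, hab⟩ : ∃ b ∈ l ++ [w], G.Adj a b := by
      cases l with
      | nil => exact ⟨w, by simp, by simpa using hch⟩
      | cons b l => exact ⟨b, by simp, by simp at hch; exact hch.1⟩
    simp only [List.cons_append] at hch hnd hS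
    obtain ⟨g, hg, hgf⟩ := hf.extend_of_uncolored (hd a) (hS a (by simp)) hab
      (hS b (List.mem_cons_of_mem _ hb))
    rw [List.nodup_cons] at hnd
    obtain ⟨k, hk, hkg⟩ := ih g (insert a S) hg hch.tail hnd.2 (by
      intro x hx hxS
      rcases mem_insert.1 hxS with rfl | h
      · exact hnd.1 hx
      · exact hS x (List.mem_cons_of_mem _ hx) h)
    refine ⟨k, ?_, fun u hu => ?_⟩
    · convert hk using 1
      ext x; simp
    · simp only [List.mem_cons, not_or] at hu
      rw [hkg u hu.2, hgf u hu.1]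

/-- A partial colouring of the complement of a set of vertices of degree at most two extends to
the whole graph. -/
lemma ProperOn.extend_low_degree {f : V → Fin 3} {T : Finset V} (hf : ProperOn G f T)
    (hT : ∀ v ∉ T, G.degree v ≤ 2) : ∃ g, ProperOn G g univ := by
  have key : ∀ U : Finset V, ∃ g, ProperOn G g (T ∪ U) := by
    intro U
    induction U using Finset.induction_on with
    | empty => exact ⟨f, by simpa using hf⟩
    | insert a U _ ih =>
      obtain ⟨g, hg⟩ := ih
      rw [union_insert]
      by_cases haT : a ∈ T ∪ U
      · exact ⟨g, by rwa [insert_eq_of_mem haT]⟩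
      · obtain ⟨k, hk, _⟩ := hg.extend haT (card_image_le.trans
          ((card_le_card inter_subset_left).trans
            ((G.card_neighborFinset_eq_degree a).le.trans (hT a fun h => haT (by simp [h])))))
        exact ⟨k, hk⟩
  obtain ⟨g, hg⟩ := key univ
  exact ⟨g, by rwa [union_eq_right.2 (subset_univ T)] at hg⟩

/-- If a subset `C` of `S` carries a cycle of the graph, some vertex `h` of which has all its
neighbours in `C`, and both `S \ C` and `C` are 3-colourable, then so is `S`: unless no edge joins
`C` to `S \ C`, a colouring of `S \ C` extends greedily around the cycle. The cycle is the list
`h :: c`; that its double is a chain says that its consecutive entries, read cyclically, are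
adjacent. -/
lemma colour_of_cycle (hd : ∀ v, G.degree v ≤ 3) {S : Finset V} {h : V} {c : List V}
    (hch : ((h :: c) ++ (h :: c)).IsChain G.Adj) (hnd : (h :: c).Nodup)
    (hcS : (h :: c).toFinset ⊆ S) (hh : ∀ x, G.Adj h x → x ∈ h :: c)
    (hout : ∃ f, ProperOn G f (S \ (h :: c).toFinset))
    (hin : ∃ f, ProperOn G f (h :: c).toFinset) : ∃ f, ProperOn G f S := by
  obtain ⟨f, hf⟩ := hout
  obtain ⟨f', hf'⟩ := hin
  set C := (h :: c).toFinset with hC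
  by_cases hE : ∃ w ∈ h :: c, ∃ x ∈ S \ C, G.Adj w x
  swap
  · -- no edge leaves the cycle: the two colourings do not interact
    push Not at hE
    refine ⟨fun v => if v ∈ C then f' v else f v, fun a ha b hb hab => ?_⟩
    by_cases haC : a ∈ C <;> by_cases hbC : b ∈ C
    · simpa [haC, hbC] using hf' a haC b hbC hab
    · exact (hE a (by simpa [hC] using haC) b (mem_sdiff.2 ⟨hb, hbC⟩) hab).elim
    · exact (hE b (by simpa [hC] using hbC) a (mem_sdiff.2 ⟨ha, haC⟩) hab.symm).elim
    · simpa [haC, hbC] using hf a (mem_sdiff.2 ⟨ha, haC⟩) b (mem_sdiff.2 ⟨hb, hbC⟩) hab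
  -- `w` is the last vertex of the list with a neighbour off the cycle; its cyclic successor `u`
  -- has none, being a later entry or `h`
  obtain ⟨A, w, B, hsplit, ⟨x, hx, hwx⟩, hB⟩ : ∃ A w B, h :: c = A ++ w :: B ∧
      (∃ x ∈ S \ C, G.Adj w x) ∧ ∀ b ∈ B, ¬ ∃ x ∈ S \ C, G.Adj b x := by
    generalize h :: c = l at hE
    induction l with
    | nil => simp at hE
    | cons a l ih =>
      by_cases h' : ∃ w ∈ l, ∃ x ∈ S \ C, G.Adj w x
      · obtain ⟨A, w, B, h1, h2, h3⟩ := ih h'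
        exact ⟨a :: A, w, B, by simp [h1], h2, h3⟩
      · push Not at h'
        refine ⟨[], a, l, rfl, ?_, fun b hb => by push Not; exact h' b hb⟩
        obtain ⟨w, hw, hw'⟩ := hE
        rcases List.mem_cons.1 hw with rfl | hw
        · exact hw'
        · obtain ⟨x, hx, hx'⟩ := hw'
          exact (h' w hw x hx hx').elim
  have hhout : ¬ ∃ x ∈ S \ C, G.Adj h x := by
    rintro ⟨x, hx, hhx⟩
    exact (mem_sdiff.1 hx).2 (by simpa [hC] using hh x hhx)
  obtain ⟨A', rfl⟩ : ∃ A', A = h :: A' := by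
    cases A with
    | nil =>
      simp only [List.nil_append, List.cons.injEq] at hsplit
      exact (hhout (hsplit.1 ▸ ⟨x, hx, hwx⟩)).elim
    | cons a A => simp only [List.cons_append, List.cons.injEq] at hsplit; exact ⟨A, by rw [hsplit.1]⟩
  obtain ⟨u, m, hum, hu⟩ : ∃ u m, B ++ h :: A' = u :: m ∧ ¬ ∃ x ∈ S \ C, G.Adj u x := by
    cases B with
    | nil => exact ⟨h, A', rfl, hhout⟩
    | cons b B => exact ⟨b, B ++ h :: A', rfl, hB b (by simp)⟩
  have hch' : (u :: m ++ [w]).IsChain G.Adj := by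
    refine hch.infix ⟨h :: A' ++ [w], B, ?_⟩
    rw [hsplit, ← hum]; simp
  have hperm : (h :: c).Perm (u :: m ++ [w]) := by
    rw [hsplit, ← hum]
    refine (List.perm_append_comm).trans ?_
    simpa using (List.perm_append_comm (l₁ := [w]) (l₂ := B ++ h :: A'))
  have hnd' := hperm.nodup_iff.1 hnd
  have hmem : ∀ y, y ∈ C ↔ y ∈ u :: m ++ [w] := fun y => by
    rw [hC, List.mem_toFinset]; exact hperm.mem_iff
  have huC : u ∉ S \ C := fun h' => (mem_sdiff.1 h').2 ((hmem u).2 (by simp))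
  -- `u` receives the colour of the neighbour `x` of `w`
  have hf1 := hf.update huC (f x) fun s hs hus => (hu ⟨s, hs, hus⟩).elim
  obtain ⟨g, hg, hgf⟩ := ProperOn.extend_path hd w m _ _ hf1 hch'.tail (List.nodup_cons.1 hnd').2 (by
    intro y hy hy'
    rcases mem_insert.1 hy' with rfl | hy'
    · exact (List.nodup_cons.1 hnd').1 hy
    · exact (mem_sdiff.1 hy').2 ((hmem y).2 (List.mem_cons_of_mem _ hy)))
  have hux : u ≠ x := fun h' => huC (h' ▸ hx)
  have hgu : g u = f x := by
    rw [hgf u (fun h' => (List.nodup_cons.1 hnd').1 (by simp [h']))]; simp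
  have hgx : g x = f x := by
    rw [hgf x (fun h' => (mem_sdiff.1 hx).2 ((hmem x).2 (by simp [h'])))]; simp [hux.symm]
  have hwu : G.Adj w u := by
    have : (w :: u :: m).IsChain G.Adj := by
      refine hch.infix ⟨h :: A', w :: B, ?_⟩
      rw [hsplit, ← hum]; simp
    simp at this
    exact this.1
  have hwn : w ∉ insert u (S \ C) ∪ m.toFinset := by
    have : w ∈ C := (hmem w).2 (by simp)
    have h2 : w ∉ u :: m := fun h' => (List.nodup_append.1 hnd').2.2 w h' w (by simp) rfl
    simp only [List.mem_cons, not_or] at h2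
    simp [this, h2.1, h2.2]
  obtain ⟨k, hk, _⟩ := hg.extend_of_eq (hd w) hwn hwu hwx hux (hgu.trans hgx.symm)
  refine ⟨k, ?_⟩
  convert hk using 1
  ext y
  have h1 := hmem y
  have h2 := @hcS y
  simp only [List.mem_append, List.mem_cons, List.not_mem_nil, or_false] at h1
  simp only [mem_insert, mem_union, mem_sdiff, List.mem_toFinset]
  tauto

/-- Colouring along a Hamiltonian path `q, y, v, x` in which `x` and `y` are not adjacent and `v`
has a third neighbour `z`: give `x` and `y` the same colour, run greedily from `y` up to `z`
excluded, then from the other end up to `z` included, and finish with `v`. -/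
lemma colour_of_path (hd : ∀ v, G.degree v ≤ 3) {S : Finset V} {q : List V} {x y v z : V}
    (hch : (q ++ [y, v, x]).IsChain G.Adj) (hnd : (q ++ [y, v, x]).Nodup)
    (hS : (q ++ [y, v, x]).toFinset = S) (hxy : ¬ G.Adj x y) (hvz : G.Adj v z) (hz : z ∈ q) :
    ∃ f, ProperOn G f S := by
  obtain ⟨q₁, q₂, rfl⟩ := List.append_of_mem hz
  have hyx : ¬ G.Adj y x := fun h => hxy h.symm
  have h0 : ProperOn G (fun _ => 0) {x, y} := by
    intro a ha b hb hab
    simp only [mem_insert, mem_singleton] at ha hb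
    rcases ha with rfl | rfl <;> rcases hb with rfl | rfl <;> simp_all
  have hvy : G.Adj v y ∧ G.Adj v x := by
    have : [y, v, x].IsChain G.Adj := hch.infix ⟨q₁ ++ z :: q₂, [], by simp⟩
    simp at this
    exact ⟨this.1.symm, this.2⟩
  have hc1 : (q₂.reverse ++ [z]).IsChain G.Adj := by
    have : (z :: q₂).IsChain G.Adj := hch.infix ⟨q₁, [y, v, x], by simp⟩
    rw [← List.reverse_cons, List.isChain_reverse]
    exact this.imp fun _ _ h => h.symm
  have hc2 : ((q₁ ++ [z]) ++ [v]).IsChain G.Adj := by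
    have : (q₁ ++ [z]).IsChain G.Adj := hch.infix ⟨[], q₂ ++ [y, v, x], by simp⟩
    rw [List.isChain_append]
    exact ⟨this, by simp, by simpa using hvz.symm⟩
  have hnd' : (q₁ ++ (z :: (q₂ ++ [y, v, x]))).Nodup := by simpa using hnd
  simp only [List.nodup_append, List.nodup_cons, List.mem_append, List.mem_cons,
    List.not_mem_nil, or_false, not_or] at hnd'
  obtain ⟨g, hg, hgf⟩ := ProperOn.extend_path hd z q₂.reverse _ _ h0 hc1
    (by simp [List.nodup_append]; grind) (by simp; grind)
  obtain ⟨k, hk, hkg⟩ := ProperOn.extend_path hd v (q₁ ++ [z]) _ _ hg hc2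
    (by simp [List.nodup_append]; grind) (by simp; grind)
  obtain ⟨r, hr, _⟩ := hk.extend_of_eq (v := v) (a := x) (b := y) (hd v) (by simp; grind)
    hvy.2 hvy.1 (by grind)
    (by rw [hkg x (by simp; grind), hkg y (by simp; grind), hgf x (by simp; grind),
      hgf y (by simp; grind)])
  refine ⟨r, ?_⟩
  convert hr using 1
  rw [← hS]
  ext t
  simp
  tauto

/-- **Brooks' theorem** for maximum degree three, in a form suited to induction on the vertex
set. -/
lemma brooks_three (hd : ∀ v, G.degree v ≤ 3) (hK : G.CliqueFree 4) (S : Finset V) :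
    ∃ f, ProperOn G f S := by
  induction S using Finset.strongInduction with
  | H S ih =>
  rcases S.eq_empty_or_nonempty with rfl | ⟨v, hv⟩
  · exact ⟨fun _ => 0, fun a ha => by simp at ha⟩
  by_cases hlow : ∃ v ∈ S, (G.neighborFinset v ∩ S).card ≤ 2
  · obtain ⟨v, hv, hc⟩ := hlow
    obtain ⟨f, hf⟩ := ih (S.erase v) (erase_ssubset hv)
    obtain ⟨g, hg, _⟩ := hf.extend (notMem_erase v S) (card_image_le.trans
      ((card_le_card (inter_subset_inter_left (erase_subset v S))).trans hc))
    exact ⟨g, by rwa [insert_erase hv] at hg⟩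
  -- the induced graph on `S` is cubic and `S` is closed under adjacency
  push Not at hlow
  have hdeg : ∀ v ∈ S, G.neighborFinset v ∩ S = G.neighborFinset v := fun v hv =>
    eq_of_subset_of_card_le inter_subset_left (by
      rw [G.card_neighborFinset_eq_degree]; exact (hd v).trans (hlow v hv))
  have hclosed : ∀ v ∈ S, ∀ w, G.Adj v w → w ∈ S := fun v hv w hvw => by
    have : w ∈ G.neighborFinset v := by simpa using hvw
    rw [← hdeg v hv] at this
    exact (mem_inter.1 this).2
  have h3 : (G.neighborFinset v).card = 3 := le_antisymm
    ((G.card_neighborFinset_eq_degree v).le.trans (hd v)) (by rw [← hdeg v hv]; exact hlow v hv)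
  obtain ⟨x, y, z, hx, hy, hz, hxy, hxz, hyz, hnadj⟩ : ∃ x y z, G.Adj v x ∧ G.Adj v y ∧ G.Adj v z ∧
      x ≠ y ∧ x ≠ z ∧ y ≠ z ∧ ¬ G.Adj x y := by
    obtain ⟨a, b, c, hab, hac, hbc, he⟩ := card_eq_three.1 h3
    have ha : G.Adj v a := by rw [← G.mem_neighborFinset, he]; simp
    have hb : G.Adj v b := by rw [← G.mem_neighborFinset, he]; simp
    have hc : G.Adj v c := by rw [← G.mem_neighborFinset, he]; simp
    by_cases h1 : G.Adj a b
    · by_cases h2 : G.Adj a c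
      · by_cases h3 : G.Adj b c
        · refine (hK {v, a, b, c} ?_).elim
          refine (SimpleGraph.is3Clique_triple_iff.2 ⟨h1, h2, h3⟩).insert fun t ht => ?_
          rw [mem_insert, mem_insert, mem_singleton] at ht
          rcases ht with rfl | rfl | rfl <;> assumption
        · exact ⟨b, c, a, hb, hc, ha, hbc, hab.symm, hac.symm, h3⟩
      · exact ⟨a, c, b, ha, hc, hb, hac, hab, hbc.symm, h2⟩
    · exact ⟨a, b, c, ha, hb, hc, hab, hac, hbc, h1⟩
  -- a longest path in `S` ending with `y, v, x`
  let P : ℕ → Prop := fun k => ∃ q : List V, q.length = k ∧ (q ++ [y, v, x]).IsChain G.Adj ∧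
    (q ++ [y, v, x]).Nodup ∧ (q ++ [y, v, x]).toFinset ⊆ S
  have hP0 : P 0 := by
    refine ⟨[], rfl, by simp [hx, hy.symm], by simp [hx.ne, hy.ne', hxy.symm], ?_⟩
    intro t ht
    simp only [List.nil_append, List.mem_toFinset, List.mem_cons, List.not_mem_nil, or_false] at ht
    rcases ht with rfl | rfl | rfl
    exacts [hclosed v hv _ hy, hv, hclosed v hv _ hx]
  have hPb : ∀ k, P k → k ≤ Fintype.card V := by
    rintro k ⟨q, rfl, _, hn, _⟩
    exact (List.nodup_append.1 hn).1.length_le_card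
  classical
  obtain ⟨q, hqlen, hch, hnd, hqS⟩ : P (Nat.findGreatest P (Fintype.card V)) :=
    Nat.findGreatest_spec (Nat.zero_le _) hP0
  have hmax : ¬ P (q.length + 1) := fun h => by
    have := Nat.le_findGreatest (hPb _ h) h
    omega
  by_cases hfull : (q ++ [y, v, x]).toFinset = S
  · refine colour_of_path hd hch hnd hfull hnadj hz ?_
    have : z ∈ (q ++ [y, v, x]).toFinset := hfull ▸ hclosed v hv _ hz
    simpa [hxz.symm, hyz.symm, hz.ne'] using this
  obtain ⟨h, t, ht⟩ : ∃ h t, q ++ [y, v, x] = h :: t := by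
    cases q with
    | nil => exact ⟨y, [v, x], rfl⟩
    | cons a q => exact ⟨a, q ++ [y, v, x], rfl⟩
  have hhS : h ∈ S := hqS (by rw [ht]; simp)
  -- the path cannot be prolonged, so all neighbours of `h` lie on it
  have hhn : ∀ a, G.Adj h a → a ∈ t := by
    intro a ha
    by_contra hat
    refine hmax ⟨a :: q, rfl, ?_, ?_, ?_⟩
    · rw [List.cons_append, ht]
      rw [ht] at hch
      simpa [hch] using ha.symm
    · rw [List.cons_append, ht, List.nodup_cons, ← ht]
      exact ⟨by rw [ht]; simp [hat, ha.ne'], hnd⟩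
    · rw [List.cons_append, List.toFinset_cons]
      exact insert_subset (hclosed h hhS a ha) hqS
  -- cutting the path after the last neighbour `b` of `h` leaves a cycle
  obtain ⟨A, b, B, hAB, hhb, hB⟩ : ∃ A b B, t = A ++ b :: B ∧ G.Adj h b ∧ ∀ a ∈ B, ¬ G.Adj h a := by
    have hne : ∃ a ∈ t, G.Adj h a := by
      have : 0 < (G.neighborFinset h ∩ S).card := (by omega : 0 < 3).trans_le (hlow h hhS)
      obtain ⟨a, ha⟩ := card_pos.1 this
      have ha' : G.Adj h a := by simpa using (mem_inter.1 ha).1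
      exact ⟨a, hhn a ha', ha'⟩
    clear hhn ht
    induction t with
    | nil => simp at hne
    | cons a l ih =>
      by_cases h' : ∃ w ∈ l, G.Adj h w
      · obtain ⟨A, w, B, h1, h2, h3⟩ := ih h'
        exact ⟨a :: A, w, B, by simp [h1], h2, h3⟩
      · push Not at h'
        refine ⟨[], a, l, rfl, ?_, h'⟩
        obtain ⟨w, hw, hw'⟩ := hne
        rcases List.mem_cons.1 hw with rfl | hw
        · exact hw'
        · exact (h' w hw hw').elim
  have hsplit : q ++ [y, v, x] = (h :: (A ++ [b])) ++ B := by rw [ht, hAB]; simp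
  have hsub : (h :: (A ++ [b])).toFinset ⊆ (q ++ [y, v, x]).toFinset := by
    rw [hsplit]; intro a ha; simp at ha ⊢; tauto
  have hcc : (h :: (A ++ [b])).IsChain G.Adj := hch.infix ⟨[], B, by rw [hsplit]; simp⟩
  refine colour_of_cycle hd (h := h) (c := A ++ [b]) ?_ ?_ (hsub.trans hqS) ?_ (ih _ ?_) (ih _ ?_)
  · rw [List.isChain_append]
    refine ⟨hcc, hcc, ?_⟩
    rw [← List.cons_append, List.getLast?_concat]
    simpa using hhb.symm
  · rw [hsplit] at hnd
    exact (List.nodup_append.1 hnd).1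
  · intro a ha
    have h1 := hhn a ha
    have h2 : a ∉ B := fun h' => hB a h' ha
    rw [hAB] at h1
    simp at h1 ⊢
    tauto
  · exact sdiff_ssubset (hsub.trans hqS) ⟨h, by simp⟩
  · exact hsub.trans_ssubset (lt_of_le_of_ne hqS hfull)

/-- At most three vertices of degree at least three: give these distinct colours. -/
lemma colour_of_few_high (hc : (univ.filter fun v => 3 ≤ G.degree v).card ≤ 3) :
    ∃ f, ProperOn G f univ := by
  set T := univ.filter fun v => 3 ≤ G.degree v with hT
  obtain ⟨e⟩ : Nonempty (T ↪ Fin 3) := Function.Embedding.nonempty_of_card_le (by simpa using hc)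
  refine ProperOn.extend_low_degree (f := fun v => if h : v ∈ T then e ⟨v, h⟩ else 0) (T := T) ?_ ?_
  · intro a ha b hb hab
    simpa [ha, hb] using hab.ne
  · intro v hv
    simp [hT] at hv
    omega

/-- A vertex whose removal leaves a forest: two colours for the forest, the third for the
vertex. -/
lemma colour_of_acyclic (u : V) (hu : (G.induce {v : V | v ≠ u}).IsAcyclic) :
    ∃ f, ProperOn G f univ := by
  obtain ⟨C⟩ := hu.colorable_two
  refine ⟨fun v => if h : v ≠ u then (C ⟨v, h⟩).castSucc else Fin.last 2, ?_⟩
  intro a _ b _ hab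
  by_cases ha : a = u <;> by_cases hb : b = u
  · exact (G.irrefl (by rwa [ha, hb] at hab)).elim
  · simp only [ha, hb, ne_eq, not_true_eq_false, not_false_eq_true, dite_true, dite_false]
    exact (Fin.castSucc_lt_last _).ne'
  · simp only [ha, hb, ne_eq, not_true_eq_false, not_false_eq_true, dite_true, dite_false]
    exact (Fin.castSucc_lt_last _).ne
  · have := C.valid (v := ⟨a, ha⟩) (w := ⟨b, hb⟩) hab
    simpa [ha, hb] using this

/-- The three nonzero vectors of `GF(2)²`, used as colours. -/
def colVec : Fin 3 → Fin 2 → ZMod 2 := ![![1, 0], ![0, 1], ![1, 1]]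

lemma colVec_injective : Function.Injective colVec := by decide

lemma colVec_ne_zero : ∀ c, colVec c ≠ 0 := by decide

/-- Two distinct nonzero vectors of `GF(2)²` span it. -/
lemma colVec_span : ∀ c d : Fin 3, c ≠ d → ∀ g : Fin 2 → ZMod 2,
    g 0 * colVec c 0 + g 1 * colVec c 1 = 0 → g 0 * colVec d 0 + g 1 * colVec d 1 = 0 →
    g = 0 := by decide

/-- A proper colouring can be chosen to use at least two colours, the graph being edgeless if all
vertices have the same colour. -/
lemma exists_nonconstant {f : V → Fin 3} (hf : ProperOn G f univ) {a b : V} (hab : a ≠ b) :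
    ∃ g, ProperOn G g univ ∧ ∃ c d, g c ≠ g d := by
  by_cases h : ∃ c d, f c ≠ f d
  · exact ⟨f, hf, h⟩
  · push Not at h
    exact ⟨fun v => if v = a then 0 else 1, fun u _ v _ huv =>
      (hf u (mem_univ _) v (mem_univ _) huv (h u v)).elim, a, b, by simp [hab.symm]⟩

end BlocksOfFour

open BlocksOfFour


/-- Theorem 5 (blocks of size four): if the requirements graph `G` satisfies
(i) maximum degree at most 3 and no clique on 4 vertices, or (ii) at most three
vertices of degree at least 3, or (iii) there is a vertex `u` whose removal leaves an
acyclic graph, then a `2^n` factorial in blocks of size four exists from which all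
main effects and all interactions of `G` are estimable. -/
theorem stmt9 (n : ℕ) (hn : 2 ≤ n)
    (G : SimpleGraph (Fin n)) [DecidableRel G.Adj]
    (h : ((∀ v : Fin n, G.degree v ≤ 3) ∧ G.CliqueFree 4) ∨
      (Finset.univ.filter (fun v : Fin n => 3 ≤ G.degree v)).card ≤ 3 ∨
      (∃ u : Fin n, (G.induce {v : Fin n | v ≠ u}).IsAcyclic)) :
    ∃ X : Matrix (Fin 2) (Fin n) (ZMod 2),
      X.rank = 2 ∧
      (∀ j : Fin n, (fun i => X i j) ≠ 0) ∧
      (∀ j k : Fin n, G.Adj j k → (fun i => X i j) ≠ (fun i => X i k)) := by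
  classical
  obtain ⟨f, hf⟩ : ∃ f, ProperOn G f Finset.univ := by
    rcases h with ⟨hd, hK⟩ | h | ⟨u, hu⟩
    · exact brooks_three hd hK _
    · exact colour_of_few_high h
    · exact colour_of_acyclic u hu
  obtain ⟨g, hg, c, d, hcd⟩ := exists_nonconstant hf
    (a := ⟨0, by omega⟩) (b := ⟨1, by omega⟩) (by simp)
  refine ⟨fun i j => colVec (g j) i, ?_, fun j => colVec_ne_zero (g j), fun j k hjk he =>
    hg j (Finset.mem_univ _) k (Finset.mem_univ _) hjk (colVec_injective he)⟩
  -- the two rows are independent, as seen already in columns `c` and `d`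
  have hli : LinearIndependent (ZMod 2) (fun (i : Fin 2) (j : Fin n) => colVec (g j) i) := by
    rw [Fintype.linearIndependent_iff]
    intro t ht
    have hc := congrFun ht c
    have hd := congrFun ht d
    simp only [Fin.sum_univ_two, Pi.add_apply, Pi.smul_apply, smul_eq_mul, Pi.zero_apply] at hc hd
    exact congrFun (colVec_span _ _ hcd t hc hd)
  simpa using LinearIndependent.rank_matrix (M := fun i j => colVec (g j) i) hli
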